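/- arXiv:2104.11392 — 2 statements merged into one kernel-verified Lean document; each statement's English description precedes it below -/
import Mathlib

section
/- Let u : ℝ × (0,∞) → ℝ be twice continuously differentiable, let c : ℝ → ℝ, and let τ : ℝ → ℝ be twice continuously differentiable with τ(x) ≥ 0 and |τ′(x)|² = c(x) for all x. Assume that c(x) u_tt(x,t) = u_xx(x,t) for all x ∈ ℝ and t > 0. Define q(x,t) = u(x, t + τ(x)). Then for all x ∈ ℝ and t > 0, q_xx(x,t) = 2 τ′(x) q_xt(x,t) + τ″(x) q_t(x,t). -/
/-!
Write `D` for the derivative of `u` on the open half-plane `t > 0` and evaluate everything at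
`(x, t + τ x)`, which lies there because `τ ≥ 0`. The chain rule gives `q_x = u_x + τ' u_t`, hence
`q_xx = u_xx + 2 τ' u_xt + τ'² u_tt + τ'' u_t` and `q_xt = u_xt + τ' u_tt`, where the symmetry of
second derivatives of a `C²` function has been used. The difference
`q_xx - 2 τ' q_xt - τ'' q_t` is therefore `u_xx - τ'² u_tt`, which vanishes by the wave equation
together with `τ'² = c`.
-/

open Set

/-- Partial derivative in the first (spatial) variable. -/
noncomputable def pdX (v : ℝ → ℝ → ℝ) (x t : ℝ) : ℝ := deriv (fun y => v y t) x

/-- Partial derivative in the second (time) variable. -/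
noncomputable def pdT (v : ℝ → ℝ → ℝ) (x t : ℝ) : ℝ := deriv (fun s => v x s) t

/-- Chain rule along the curve `y ↦ (y, t + τ y)`. -/
lemma hasDerivAt_comp_shift {F : ℝ × ℝ → ℝ} {L : ℝ × ℝ →L[ℝ] ℝ} {τ : ℝ → ℝ} {τ' x t : ℝ}
    (hF : HasFDerivAt F L (x, t + τ x)) (hτ : HasDerivAt τ τ' x) :
    HasDerivAt (fun y => F (y, t + τ y)) (L (1, 0) + τ' * L (0, 1)) x := by
  have hv : ((1, τ') : ℝ × ℝ) = (1, 0) + τ' • (0, 1) := by simp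
  have h := hF.comp_hasDerivAt x ((hasDerivAt_id x).prodMk (hτ.const_add t))
  rw [hv, map_add, map_smul, smul_eq_mul] at h
  exact h

lemma hasDerivAt_fst_slice {F : ℝ × ℝ → ℝ} {L : ℝ × ℝ →L[ℝ] ℝ} {x t : ℝ}
    (hF : HasFDerivAt F L (x, t)) : HasDerivAt (fun y => F (y, t)) (L (1, 0)) x :=
  hF.comp_hasDerivAt x ((hasDerivAt_id x).prodMk (hasDerivAt_const x t))

lemma hasDerivAt_snd_shift {F : ℝ × ℝ → ℝ} {L : ℝ × ℝ →L[ℝ] ℝ} {x t a : ℝ}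
    (hF : HasFDerivAt F L (x, t + a)) : HasDerivAt (fun s => F (x, s + a)) (L (0, 1)) t :=
  hF.comp_hasDerivAt t ((hasDerivAt_const t x).prodMk ((hasDerivAt_id t).add_const a))

lemma hasDerivAt_snd_slice {F : ℝ × ℝ → ℝ} {L : ℝ × ℝ →L[ℝ] ℝ} {x t : ℝ}
    (hF : HasFDerivAt F L (x, t)) : HasDerivAt (fun s => F (x, s)) (L (0, 1)) t :=
  hF.comp_hasDerivAt t ((hasDerivAt_const t x).prodMk (hasDerivAt_id t))

/-- If `c(x) u_tt = u_xx` and `|τ'(x)|² = c(x)`, then the travel-time shifted function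
`q(x,t) = u(x, t + τ(x))` satisfies `q_xx = 2 τ'(x) q_xt + τ''(x) q_t`. -/
theorem travel_time_change_of_variables
    (u : ℝ → ℝ → ℝ) (c τ : ℝ → ℝ) (q : ℝ → ℝ → ℝ)
    (hu : ContDiffOn ℝ 2 (fun p : ℝ × ℝ => u p.1 p.2) (univ ×ˢ Ioi (0:ℝ)))
    (hτ : ContDiff ℝ 2 τ)
    (hτ0 : ∀ x : ℝ, 0 ≤ τ x)
    (heik : ∀ x : ℝ, |deriv τ x|^2 = c x)
    (hwave : ∀ x : ℝ, ∀ t > (0:ℝ),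
      c x * pdT (fun y s => pdT u y s) x t = pdX (fun y s => pdX u y s) x t)
    (hq : ∀ x t : ℝ, q x t = u x (t + τ x)) :
    ∀ x : ℝ, ∀ t > (0:ℝ),
      pdX (fun y s => pdX q y s) x t
        = 2 * deriv τ x * pdT (fun y s => pdX q y s) x t
          + deriv (deriv τ) x * pdT q x t := by
  intro x t ht
  obtain rfl : q = fun x t => u x (t + τ x) := by
    funext x t
    exact hq x t
  set U : ℝ × ℝ → ℝ := fun p => u p.1 p.2 with hU
  set D := fderiv ℝ U with hD
  have hC : ∀ y s : ℝ, 0 < s → ContDiffAt ℝ 2 U (y, s) := fun y s hs =>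
    hu.contDiffAt ((isOpen_univ.prod isOpen_Ioi).mem_nhds ⟨mem_univ _, hs⟩)
  have hU1 : ∀ y s : ℝ, 0 < s → HasFDerivAt U (D (y, s)) (y, s) := fun y s hs =>
    ((hC y s hs).differentiableAt (by norm_num)).hasFDerivAt
  have hpos : ∀ y s : ℝ, 0 < s → 0 < s + τ y := fun y s hs => add_pos_of_pos_of_nonneg hs (hτ0 y)
  have hτ1 : ∀ y, HasDerivAt τ (deriv τ y) y := fun y =>
    (hτ.differentiable (by norm_num) y).hasDerivAt
  have hτ2 : HasDerivAt (deriv τ) (deriv (deriv τ) x) x :=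
    ((hτ.iterate_deriv' 1 1).differentiable (by norm_num) x).hasDerivAt
  have hs : 0 < t + τ x := hpos x t ht
  set E := fderiv ℝ D (x, t + τ x) with hE
  have hD1 : HasFDerivAt D E (x, t + τ x) :=
    (((hC x _ hs).fderiv_right (m := 1) (by norm_num)).differentiableAt
      (by norm_num)).hasFDerivAt
  have hDv : ∀ v : ℝ × ℝ, HasFDerivAt (fun p => D p v) (E.flip v) (x, t + τ x) := fun v => by
    simpa using hD1.clm_apply (hasFDerivAt_const v _)
  have hsymm : E (1, 0) (0, 1) = E (0, 1) (1, 0) :=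
    ((hC x _ hs).isSymmSndFDerivAt (by simp)) (1, 0) (0, 1)
  have ux : ∀ y s, 0 < s → pdX u y s = D (y, s) (1, 0) := fun y s h =>
    (hasDerivAt_fst_slice (hU1 y s h)).deriv
  have ut : ∀ y s, 0 < s → pdT u y s = D (y, s) (0, 1) := fun y s h =>
    (hasDerivAt_snd_slice (hU1 y s h)).deriv
  have uxx : pdX (fun y s => pdX u y s) x (t + τ x) = E (1, 0) (1, 0) := by
    unfold pdX
    refine HasDerivAt.deriv ((hasDerivAt_fst_slice (hDv (1, 0))).congr_of_eventuallyEq ?_)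
    exact .of_forall fun y => ux y _ hs
  have utt : pdT (fun y s => pdT u y s) x (t + τ x) = E (0, 1) (0, 1) := by
    refine HasDerivAt.deriv ((hasDerivAt_snd_slice (hDv (0, 1))).congr_of_eventuallyEq ?_)
    filter_upwards [lt_mem_nhds hs] with s h using ut x s h
  have qx : ∀ y s, 0 < s → pdX (fun x t => u x (t + τ x)) y s
      = D (y, s + τ y) (1, 0) + deriv τ y * D (y, s + τ y) (0, 1) := fun y s h =>
    (hasDerivAt_comp_shift (hU1 y _ (hpos y s h)) (hτ1 y)).deriv
  have qt : pdT (fun x t => u x (t + τ x)) x t = D (x, t + τ x) (0, 1) :=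
    (hasDerivAt_snd_shift (hU1 x _ hs)).deriv
  have qxx : pdX (fun y s => pdX (fun x t => u x (t + τ x)) y s) x t
      = (E (1, 0) (1, 0) + deriv τ x * E (0, 1) (1, 0))
        + (deriv (deriv τ) x * D (x, t + τ x) (0, 1)
          + deriv τ x * (E (1, 0) (0, 1) + deriv τ x * E (0, 1) (0, 1))) := by
    refine HasDerivAt.deriv (((hasDerivAt_comp_shift (hDv (1, 0)) (hτ1 x)).add
      (hτ2.mul (hasDerivAt_comp_shift (hDv (0, 1)) (hτ1 x)))).congr_of_eventuallyEq ?_)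
    exact .of_forall fun y => qx y t ht
  have qxt : pdT (fun y s => pdX (fun x t => u x (t + τ x)) y s) x t
      = E (0, 1) (1, 0) + deriv τ x * E (0, 1) (0, 1) := by
    refine HasDerivAt.deriv (((hasDerivAt_snd_shift (hDv (1, 0))).add
      ((hasDerivAt_snd_shift (hDv (0, 1))).const_mul (deriv τ x))).congr_of_eventuallyEq ?_)
    filter_upwards [lt_mem_nhds ht] with s h using qx x s h
  have hw := hwave x _ hs
  rw [uxx, utt, ← heik, sq_abs] at hw
  rw [qxx, qxt, qt, hsymm, ← hw]
  ring
end

section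
/- Let u : ℝ × (0,∞) → ℝ be twice continuously differentiable, let c : ℝ → ℝ, and let τ : ℝ → ℝ be twice continuously differentiable with τ(x) ≥ 0 and |τ′(x)|² = c(x) for all x. Assume that c(x) u_tt(x,t) = u_xx(x,t) for all x ∈ ℝ and t > 0. Define q(x,t) = u(x, t + τ(x)), and assume that q extends to t = 0 so that x ↦ q(x,0) is continuously differentiable on (ε,M), that q(x,0) > 0 on (ε,M), that τ′(x) = 1/(4 q²(x,0)) for all x ∈ (ε,M), and that the partial derivatives q_xx, q_xt, q_t of q extend continuously to (ε,M) × [0,T). Then q satisfies, for all (x,t) ∈ (ε,M) × (0,T), the equation q_xx(x,t) − q_xt(x,t)/(2 q²(x,0)) + q_t(x,t) q_x(x,0)/(2 q³(x,0)) = 0, where q_x(x,0) denotes the derivative of x ↦ q(x,0). -/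
/-!
Away from `t = 0` this is the chain rule. Writing `u_x, u_t, …` for the partial derivatives
of `u` at `(x, t + τ x)`, one has `q_t = u_t`, `q_x = u_x + τ' u_t`, `q_xt = u_xt + τ' u_tt` and
`q_xx = u_xx + 2 τ' u_xt + τ'² u_tt + τ'' u_t`, where the mixed derivatives agree because `u` is `C²`.
Hence `q_xx - 2 τ' q_xt - τ'' q_t = u_xx - τ'² u_tt`, which vanishes by the wave equation and the
eikonal equation `τ'² = c`. Differentiating `τ' = 1 / (4 q(x,0)²)` gives
`τ'' = - q_x(x,0) / (2 q(x,0)³)`, and substituting both yields the claim.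
Since `τ ≥ 0`, the point `(x, t + τ x)` stays in the open half-plane where `u` is smooth.
-/

open Set

/-- Chain rule along the sheared curve `y ↦ (y, t + τ y)`. -/
lemma hasDerivAt_shear_x {F : ℝ × ℝ → ℝ} {τ : ℝ → ℝ} {x t d : ℝ}
    (hF : DifferentiableAt ℝ F (x, t + τ x)) (hτ : HasDerivAt τ d x) :
    HasDerivAt (fun y => F (y, t + τ y))
      (fderiv ℝ F (x, t + τ x) (1, 0) + d * fderiv ℝ F (x, t + τ x) (0, 1)) x := by
  have hc : HasDerivAt (fun y => (y, t + τ y)) ((1 : ℝ), d) x :=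
    (hasDerivAt_id x).prodMk (hτ.const_add t)
  have h := hF.hasFDerivAt.comp_hasDerivAt x hc
  have e : ((1 : ℝ), d) = (1, 0) + d • ((0 : ℝ), (1 : ℝ)) := by simp
  rw [e, map_add, map_smul, smul_eq_mul] at h
  exact h

/-- Derivative in time at a fixed position, with the time shifted by `a`. -/
lemma hasDerivAt_shear_t {F : ℝ × ℝ → ℝ} {x t a : ℝ}
    (hF : DifferentiableAt ℝ F (x, t + a)) :
    HasDerivAt (fun s => F (x, s + a)) (fderiv ℝ F (x, t + a) (0, 1)) t := by
  have hc : HasDerivAt (fun s => (x, s + a)) ((0 : ℝ), (1 : ℝ)) t :=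
    (hasDerivAt_const t x).prodMk ((hasDerivAt_id t).add_const a)
  exact hF.hasFDerivAt.comp_hasDerivAt t hc

/-- The function `q(x,t) = u(x, t + τ(x))` satisfies the nonlinear nonlocal equation
`q_xx − q_xt/(2 q²(x,0)) + q_t q_x(x,0)/(2 q³(x,0)) = 0` on `(ε,M) × (0,T)`,
where the unknown coefficient `c` is not present. -/
theorem q_equation_without_coefficient
    (ε M T : ℝ) (hε : 0 < ε) (hεM : ε < M) (hT : 0 < T)
    (u : ℝ → ℝ → ℝ) (c τ : ℝ → ℝ) (q : ℝ → ℝ → ℝ)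
    (hu : ContDiffOn ℝ 2 (fun p : ℝ × ℝ => u p.1 p.2) (univ ×ˢ Ioi (0:ℝ)))
    (hτ : ContDiff ℝ 2 τ)
    (hτ0 : ∀ x : ℝ, 0 ≤ τ x)
    (heik : ∀ x : ℝ, |deriv τ x|^2 = c x)
    (hwave : ∀ x : ℝ, ∀ t > (0:ℝ),
      c x * pdT (fun y s => pdT u y s) x t = pdX (fun y s => pdX u y s) x t)
    (hq : ∀ x t : ℝ, q x t = u x (t + τ x))
    (hq0C1 : ContDiffOn ℝ 1 (fun x => q x 0) (Ioo ε M))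
    (hq0pos : ∀ x ∈ Ioo ε M, 0 < q x 0)
    (hτ' : ∀ x ∈ Ioo ε M, deriv τ x = 1 / (4 * (q x 0)^2))
    (hqxx : ContinuousOn (fun p : ℝ × ℝ => pdX (fun y s => pdX q y s) p.1 p.2)
      (Ioo ε M ×ˢ Ico 0 T))
    (hqxt : ContinuousOn (fun p : ℝ × ℝ => pdT (fun y s => pdX q y s) p.1 p.2)
      (Ioo ε M ×ˢ Ico 0 T))
    (hqt : ContinuousOn (fun p : ℝ × ℝ => pdT q p.1 p.2) (Ioo ε M ×ˢ Ico 0 T)) :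
    ∀ x ∈ Ioo ε M, ∀ t ∈ Ioo (0:ℝ) T,
      pdX (fun y s => pdX q y s) x t
        - pdT (fun y s => pdX q y s) x t / (2 * (q x 0)^2)
        + pdT q x t * deriv (fun y => q y 0) x / (2 * (q x 0)^3) = 0 := by
  intro x hx t ht
  set U : ℝ × ℝ → ℝ := fun p => u p.1 p.2 with hU
  set A : ℝ × ℝ → ℝ := fun p => fderiv ℝ U p (1, 0) with hA
  set B : ℝ × ℝ → ℝ := fun p => fderiv ℝ U p (0, 1) with hB
  have hCD : ∀ y s, 0 < s → ContDiffAt ℝ 2 U (y, s) := fun y s hs =>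
    hu.contDiffAt ((isOpen_univ.prod isOpen_Ioi).mem_nhds ⟨mem_univ _, hs⟩)
  have hUd : ∀ y s, 0 < s → DifferentiableAt ℝ U (y, s) := fun y s hs =>
    (hCD y s hs).differentiableAt (by norm_num)
  have hDd : ∀ y s, 0 < s → DifferentiableAt ℝ (fderiv ℝ U) (y, s) := fun y s hs =>
    ((hCD y s hs).fderiv_right (m := 1) (by norm_num)).differentiableAt (by norm_num)
  have hAd : ∀ y s, 0 < s → DifferentiableAt ℝ A (y, s) := fun y s hs =>
    (hDd y s hs).clm_apply (differentiableAt_const _)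
  have hBd : ∀ y s, 0 < s → DifferentiableAt ℝ B (y, s) := fun y s hs =>
    (hDd y s hs).clm_apply (differentiableAt_const _)
  have hmixed : ∀ y s, 0 < s → fderiv ℝ B (y, s) (1, 0) = fderiv ℝ A (y, s) (0, 1) := by
    intro y s hs
    have hsymm := (hCD y s hs).isSymmSndFDerivAt (by simp)
    rw [hA, hB, fderiv_clm_apply (hDd y s hs) (differentiableAt_const _),
      fderiv_clm_apply (hDd y s hs) (differentiableAt_const _)]
    simpa using hsymm (1, 0) (0, 1)
  have hτd : ∀ y, HasDerivAt τ (deriv τ y) y := fun y =>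
    (hτ.differentiable (by norm_num) y).hasDerivAt
  -- Partial derivatives along the axes are the special case of zero shear.
  have hX : ∀ F : ℝ × ℝ → ℝ, ∀ y s, DifferentiableAt ℝ F (y, s) →
      deriv (fun z => F (z, s)) y = fderiv ℝ F (y, s) (1, 0) := by
    intro F y s hF
    have h := hasDerivAt_shear_x (τ := fun _ => 0) (t := s) (x := y) (by simpa using hF)
      (hasDerivAt_const y (0 : ℝ))
    simpa using h.deriv
  have hTt : ∀ F : ℝ × ℝ → ℝ, ∀ y s, DifferentiableAt ℝ F (y, s) →
      deriv (fun r => F (y, r)) s = fderiv ℝ F (y, s) (0, 1) := by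
    intro F y s hF
    have h := hasDerivAt_shear_t (a := 0) (t := s) (x := y) (F := F) (by simpa using hF)
    simpa using h.deriv
  have hpos : ∀ y, 0 < t + τ y := fun y => add_pos_of_pos_of_nonneg ht.1 (hτ0 y)
  have huxx : pdX (fun y s => pdX u y s) x (t + τ x) = fderiv ℝ A (x, t + τ x) (1, 0) := by
    rw [← hX A x _ (hAd _ _ (hpos x))]
    exact congrArg (fun f => deriv f x) (funext fun y => hX U y _ (hUd _ _ (hpos x)))
  have hutt : pdT (fun y s => pdT u y s) x (t + τ x) = fderiv ℝ B (x, t + τ x) (0, 1) := by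
    rw [← hTt B x _ (hBd _ _ (hpos x))]
    refine Filter.EventuallyEq.deriv_eq ?_
    filter_upwards [lt_mem_nhds (hpos x)] with s hs
    exact hTt U x s (hUd _ _ hs)
  have hqx : ∀ y s, 0 < s →
      pdX q y s = A (y, s + τ y) + deriv τ y * B (y, s + τ y) := by
    intro y s hs
    have h := hasDerivAt_shear_x (hUd y (s + τ y) (by linarith [hτ0 y])) (hτd y)
    simp only [pdX, hq]
    exact h.deriv
  have hqt' : pdT q x t = B (x, t + τ x) := by
    simp only [pdT, hq]
    exact (hasDerivAt_shear_t (hUd x (t + τ x) (hpos x))).deriv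
  have hqxt' : pdT (fun y s => pdX q y s) x t
      = fderiv ℝ A (x, t + τ x) (0, 1) + deriv τ x * fderiv ℝ B (x, t + τ x) (0, 1) := by
    have h := (hasDerivAt_shear_t (hAd x (t + τ x) (hpos x))).add
      ((hasDerivAt_shear_t (hBd x (t + τ x) (hpos x))).const_mul (deriv τ x))
    refine Eq.trans (Filter.EventuallyEq.deriv_eq ?_) h.deriv
    filter_upwards [lt_mem_nhds ht.1] with s hs
    exact hqx x s hs
  -- `τ''` is obtained by differentiating `τ' = 1 / (4 q(·,0)²)` near `x`.
  have hqd : HasDerivAt (fun y => q y 0) (deriv (fun y => q y 0) x) x :=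
    ((hq0C1.contDiffAt (Ioo_mem_nhds hx.1 hx.2)).differentiableAt (by norm_num)).hasDerivAt
  have hq0 : q x 0 ≠ 0 := (hq0pos x hx).ne'
  have hτ2 : HasDerivAt (deriv τ) (-(deriv (fun y => q y 0) x) / (2 * (q x 0)^3)) x := by
    have h := ((hqd.pow 2).const_mul 4).inv (by simpa using hq0)
    refine HasDerivAt.congr_of_eventuallyEq (h.congr_deriv ?_) ?_
    · simp only [Pi.pow_apply]
      field_simp
      norm_num
      ring
    · filter_upwards [Ioo_mem_nhds hx.1 hx.2] with y hy
      simp [hτ' y hy]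
  have hqxx' : pdX (fun y s => pdX q y s) x t
      = (fderiv ℝ A (x, t + τ x) (1, 0) + deriv τ x * fderiv ℝ A (x, t + τ x) (0, 1))
        + (-(deriv (fun y => q y 0) x) / (2 * (q x 0)^3) * B (x, t + τ x)
          + deriv τ x * (fderiv ℝ B (x, t + τ x) (1, 0)
            + deriv τ x * fderiv ℝ B (x, t + τ x) (0, 1))) := by
    have h := (hasDerivAt_shear_x (hAd x (t + τ x) (hpos x)) (hτd x)).add
      (hτ2.mul (hasDerivAt_shear_x (hBd x (t + τ x) (hpos x)) (hτd x)))
    exact (congrArg (fun f => deriv f x) (funext fun y => hqx y t ht.1)).trans h.deriv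
  have hw := hwave x (t + τ x) (hpos x)
  rw [huxx, hutt, ← heik x, sq_abs] at hw
  have hcoef : ∀ z, z / (2 * (q x 0)^2) = 2 * deriv τ x * z := by
    intro z
    rw [hτ' x hx]
    field_simp
    norm_num
  rw [hcoef, hqxx', hqxt', hqt', hmixed x _ (hpos x), ← hw]
  ring
end
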